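/- For every constant C > 0 and every θ ∈ (0,1/4) there exist a constant C' > 0 and a time t₀ ≥ 1 such that the following holds. For all t ≥ t₀, all x ≥ 0 and all ξ = (ξ₁,ξ₂,ξ₃) ∈ ℝ³ with x − t(ξ₁+u) ≥ 0, ∫₀^{t} e^{−ν(ξ)(t−s)} · ( ∫_{ℝ³} e^{−θ|ξ'|²} ( ∫_{ℝ³} e^{−C|ξ'−ξ''|²}/|ξ'−ξ''| · α(x−(ξ₁+u)(t−s), ξ'')⁻¹ dξ'' ) dξ' ) ds ≤ C' · t / α(x,ξ). -/

import Mathlib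

open MeasureTheory

noncomputable section

/-- The kinetic weight `α̃(x,ξ) = √((ξ₁+u)² + (cν₀)² x²)`. -/
def alphaTilde (u c ν₀ : ℝ) (x : ℝ) (ξ : EuclideanSpace ℝ (Fin 3)) : ℝ :=
  Real.sqrt ((ξ 0 + u) ^ 2 + (c * ν₀) ^ 2 * x ^ 2)

/-!
By AM-GM, `1/|z| ≤ |z₂|^{-1/2} |z₃|^{-1/2}` and `1/α̃(y,ξ) ≤ |ξ₁+u|^{-1/2} |cν₀y|^{-1/2}`. The
velocity integral is therefore dominated by a product of one-dimensional integrals of a Gaussian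
against an inverse square root, each bounded uniformly in the position of the singularity; only
`|y|^{-1/2}` survives, with `y = x - (ξ₁+u)(t-s)` the position along the characteristic.

With `M = max(x, |ξ₁+u|)`, the condition `x - t(ξ₁+u) ≥ 0` forces `t y ≥ M min(s, t-s)`, so the time
integral of `1 + y^{-1/2}` is at most a multiple of `t (1 + M^{-1/2})`. As `χ(α̃) ≲ min(α̃, 1)` and
`α̃(x,ξ) ≲ M`, this is `≲ t / α(x,ξ)`.
-/

section OneDimensional

/-- The singular weight `|w| ^ (-r)` cut off outside `[-1, 1]`; the part of `|w| ^ (-r)` that a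
Gaussian factor cannot control. -/
def truncatedRpowAbs (r w : ℝ) : ℝ :=
  (Set.Iic 1).indicator (fun s ↦ s ^ (-r)) |w|

variable {r C : ℝ}

lemma truncatedRpowAbs_nonneg (r w : ℝ) : 0 ≤ truncatedRpowAbs r w := by
  rw [truncatedRpowAbs, Set.indicator_apply]
  positivity

lemma integral_truncatedRpowAbs (hr : r < 1) : ∫ w, truncatedRpowAbs r w = 2 / (1 - r) := by
  simp only [truncatedRpowAbs]
  rw [integral_comp_abs (f := (Set.Iic 1).indicator fun s ↦ s ^ (-r)),
    setIntegral_indicator measurableSet_Iic, Set.Ioi_inter_Iic,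
    ← intervalIntegral.integral_of_le zero_le_one, integral_rpow (.inl (by linarith)),
    Real.one_rpow, Real.zero_rpow (by linarith), neg_add_eq_sub]
  ring

lemma integrable_truncatedRpowAbs (hr : r < 1) : Integrable (truncatedRpowAbs r) := by
  have : 0 < 1 - r := sub_pos.2 hr
  refine .of_integral_ne_zero ?_
  rw [integral_truncatedRpowAbs hr]
  positivity

lemma exp_neg_mul_sq_mul_rpow_abs_le (hC : 0 ≤ C) (hr : 0 ≤ r) (z w : ℝ) :
    Real.exp (-C * z ^ 2) * |w| ^ (-r) ≤ truncatedRpowAbs r w + Real.exp (-C * z ^ 2) := by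
  have exp_le_one : Real.exp (-C * z ^ 2) ≤ 1 :=
    Real.exp_le_one_iff.2 (mul_nonpos_of_nonpos_of_nonneg (neg_nonpos.2 hC) (sq_nonneg z))
  rcases le_or_gt |w| 1 with hw | hw
  · rw [truncatedRpowAbs, Set.indicator_of_mem (Set.mem_Iic.2 hw)]
    exact (mul_le_of_le_one_left (by positivity) exp_le_one).trans
      (le_add_of_nonneg_right (Real.exp_nonneg _))
  · refine le_add_of_nonneg_of_le (truncatedRpowAbs_nonneg r w) ?_
    exact mul_le_of_le_one_right (Real.exp_nonneg _)
      (Real.rpow_le_one_of_one_le_of_nonpos hw.le (neg_nonpos.2 hr))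

lemma integrable_truncatedRpowAbs_add_exp (hC : 0 < C) (hr : r < 1) (a b : ℝ) :
    Integrable fun w ↦ truncatedRpowAbs r (w - b) + Real.exp (-C * (w - a) ^ 2) :=
  ((integrable_truncatedRpowAbs hr).comp_sub_right b).add
    ((integrable_exp_neg_mul_sq hC).comp_sub_right a)

lemma integrable_exp_neg_mul_sq_mul_rpow_abs (hC : 0 < C) (hr₀ : 0 ≤ r) (hr : r < 1) (a b : ℝ) :
    Integrable fun w ↦ Real.exp (-C * (w - a) ^ 2) * |w - b| ^ (-r) := by
  refine (integrable_truncatedRpowAbs_add_exp hC hr a b).mono' (by fun_prop) (.of_forall fun w ↦ ?_)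
  rw [Real.norm_of_nonneg (by positivity)]
  exact exp_neg_mul_sq_mul_rpow_abs_le hC.le hr₀ _ _

lemma integral_exp_neg_mul_sq_mul_rpow_abs_le (hC : 0 < C) (hr₀ : 0 ≤ r) (hr : r < 1) (a b : ℝ) :
    ∫ w, Real.exp (-C * (w - a) ^ 2) * |w - b| ^ (-r) ≤ 2 / (1 - r) + √(Real.pi / C) := by
  calc
    _ ≤ ∫ w, (truncatedRpowAbs r (w - b) + Real.exp (-C * (w - a) ^ 2)) :=
      integral_mono (integrable_exp_neg_mul_sq_mul_rpow_abs hC hr₀ hr a b)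
        (integrable_truncatedRpowAbs_add_exp hC hr a b)
        fun w ↦ exp_neg_mul_sq_mul_rpow_abs_le hC.le hr₀ _ _
    _ = 2 / (1 - r) + √(Real.pi / C) := by
      rw [integral_add ((integrable_truncatedRpowAbs hr).comp_sub_right b)
          ((integrable_exp_neg_mul_sq hC).comp_sub_right a),
        integral_sub_right_eq_self (truncatedRpowAbs r) b,
        integral_sub_right_eq_self (fun w ↦ Real.exp (-C * w ^ 2)) a,
        integral_truncatedRpowAbs hr, integral_gaussian]

end OneDimensional

section Velocity

variable {r C : ℝ}

lemma integrable_exp_neg_mul_sq_mul_add_rpow_abs (hC : 0 < C) (hr₀ : 0 ≤ r) (hr : r < 1)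
    (a b P Q : ℝ) :
    Integrable fun w ↦ Real.exp (-C * (w - a) ^ 2) * (P + Q * |w - b| ^ (-r)) := by
  refine ((((integrable_exp_neg_mul_sq hC).comp_sub_right a).const_mul P).add
    ((integrable_exp_neg_mul_sq_mul_rpow_abs hC hr₀ hr a b).const_mul Q)).congr (.of_forall ?_)
  intro w
  simp only [Pi.add_apply]
  ring

lemma integral_exp_neg_mul_sq_mul_add_rpow_abs_le (hC : 0 < C) (hr₀ : 0 ≤ r) (hr : r < 1)
    (a b : ℝ) {P Q : ℝ} (hP : 0 ≤ P) (hQ : 0 ≤ Q) :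
    ∫ w, Real.exp (-C * (w - a) ^ 2) * (P + Q * |w - b| ^ (-r)) ≤
      (P + Q) * (2 / (1 - r) + √(Real.pi / C)) := by
  have h_gauss : ∫ w, Real.exp (-C * (w - a) ^ 2) = √(Real.pi / C) := by
    rw [integral_sub_right_eq_self (fun w ↦ Real.exp (-C * w ^ 2)) a, integral_gaussian]
  have h_sing := integral_exp_neg_mul_sq_mul_rpow_abs_le hC hr₀ hr a b
  have : 0 < 1 - r := sub_pos.2 hr
  calc
    _ = P * √(Real.pi / C) + Q * ∫ w, Real.exp (-C * (w - a) ^ 2) * |w - b| ^ (-r) := by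
      rw [← h_gauss, ← integral_const_mul, ← integral_const_mul, ← integral_add
        (((integrable_exp_neg_mul_sq hC).comp_sub_right a).const_mul P)
        ((integrable_exp_neg_mul_sq_mul_rpow_abs hC hr₀ hr a b).const_mul Q)]
      congr with w
      ring
    _ ≤ P * (2 / (1 - r) + √(Real.pi / C)) + Q * (2 / (1 - r) + √(Real.pi / C)) := by
      gcongr
      exact le_add_of_nonneg_left (by positivity)
    _ = _ := by ring

section Product

variable {ι : Type*} [Fintype ι]

lemma integrable_prod_exp_neg_mul_sq_mul_add_rpow_abs (hC : 0 < C) (hr₀ : 0 ≤ r) (hr : r < 1)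
    (a b P Q : ι → ℝ) :
    Integrable fun w : ι → ℝ ↦
      ∏ i, Real.exp (-C * (w i - a i) ^ 2) * (P i + Q i * |w i - b i| ^ (-r)) :=
  .fintype_prod fun i ↦
    integrable_exp_neg_mul_sq_mul_add_rpow_abs hC hr₀ hr (a i) (b i) (P i) (Q i)

lemma integral_prod_exp_neg_mul_sq_mul_add_rpow_abs_le (hC : 0 < C) (hr₀ : 0 ≤ r) (hr : r < 1)
    (a b : ι → ℝ) {P Q : ι → ℝ} (hP : ∀ i, 0 ≤ P i) (hQ : ∀ i, 0 ≤ Q i) :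
    ∫ w : ι → ℝ, ∏ i, Real.exp (-C * (w i - a i) ^ 2) * (P i + Q i * |w i - b i| ^ (-r)) ≤
      ∏ i, (P i + Q i) * (2 / (1 - r) + √(Real.pi / C)) := by
  rw [integral_fintype_prod_volume_eq_prod
    fun i w ↦ Real.exp (-C * (w - a i) ^ 2) * (P i + Q i * |w - b i| ^ (-r))]
  refine Finset.prod_le_prod (fun i _ ↦ integral_nonneg fun w ↦ ?_) fun i _ ↦
    integral_exp_neg_mul_sq_mul_add_rpow_abs_le hC hr₀ hr (a i) (b i) (hP i) (hQ i)
  have := hP i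
  have := hQ i
  positivity

end Product

lemma inv_sqrt_sq_add_sq_le {a b : ℝ} (ha : a ≠ 0) (hb : b ≠ 0) :
    (√(a ^ 2 + b ^ 2))⁻¹ ≤ |a| ^ (-(1 / 2) : ℝ) * |b| ^ (-(1 / 2) : ℝ) := by
  have h_amgm : |a| * |b| ≤ a ^ 2 + b ^ 2 := by
    rw [← sq_abs a, ← sq_abs b]
    nlinarith [sq_nonneg (|a| - |b|), sq_nonneg (|a| + |b|)]
  have : 0 < |a| * |b| := by positivity
  rw [← Real.mul_rpow (abs_nonneg a) (abs_nonneg b), Real.rpow_neg this.le, ← Real.sqrt_eq_rpow]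
  gcongr

/-- The kernel `e^{-C|z|²} / |z|` of the velocity averaging operator, with value `0` at `z = 0`. -/
def singularKernel (C : ℝ) (z : EuclideanSpace ℝ (Fin 3)) : ℝ :=
  Real.exp (-C * ‖z‖ ^ 2) / ‖z‖

lemma singularKernel_nonneg (C : ℝ) (z : EuclideanSpace ℝ (Fin 3)) : 0 ≤ singularKernel C z := by
  unfold singularKernel
  positivity

lemma singularKernel_sub_comm (C : ℝ) (z w : EuclideanSpace ℝ (Fin 3)) :
    singularKernel C (z - w) = singularKernel C (w - z) := by
  simp only [singularKernel, norm_sub_rev z w]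

-- The singularity is shared between two of the three coordinates, so that a further factor
-- `|ξ₁ + u| ^ (-1/2)` in the remaining coordinate stays integrable.
lemma singularKernel_le (C : ℝ) {z : EuclideanSpace ℝ (Fin 3)} (h₁ : z 1 ≠ 0) (h₂ : z 2 ≠ 0) :
    singularKernel C z ≤ Real.exp (-C * z 0 ^ 2) *
      (Real.exp (-C * z 1 ^ 2) * |z 1| ^ (-(1 / 2) : ℝ)) *
      (Real.exp (-C * z 2 ^ 2) * |z 2| ^ (-(1 / 2) : ℝ)) := by
  have norm_sq : ‖z‖ ^ 2 = z 0 ^ 2 + z 1 ^ 2 + z 2 ^ 2 := by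
    rw [EuclideanSpace.real_norm_sq_eq, Fin.sum_univ_three]
  have le_norm : √(z 1 ^ 2 + z 2 ^ 2) ≤ ‖z‖ :=
    Real.sqrt_le_iff.2 ⟨norm_nonneg z, by rw [norm_sq]; linarith [sq_nonneg (z 0)]⟩
  have inv_norm_le : ‖z‖⁻¹ ≤ |z 1| ^ (-(1 / 2) : ℝ) * |z 2| ^ (-(1 / 2) : ℝ) :=
    (inv_anti₀ (by positivity) le_norm).trans (inv_sqrt_sq_add_sq_le h₁ h₂)
  calc
    singularKernel C z = Real.exp (-C * ‖z‖ ^ 2) * ‖z‖⁻¹ := div_eq_mul_inv _ _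
    _ ≤ Real.exp (-C * ‖z‖ ^ 2) * (|z 1| ^ (-(1 / 2) : ℝ) * |z 2| ^ (-(1 / 2) : ℝ)) := by gcongr
    _ = _ := by
      rw [norm_sq, mul_add, mul_add, Real.exp_add, Real.exp_add]
      ring

lemma integral_singularKernel_mul_le (hC : 0 < C) (u : ℝ) {P Q : ℝ} (hP : 0 ≤ P) (hQ : 0 ≤ Q)
    {A : EuclideanSpace ℝ (Fin 3) → ℝ} (hA₀ : ∀ ξ, 0 ≤ A ξ)
    (hA : ∀ ξ, ξ 0 + u ≠ 0 → A ξ ≤ P + Q * |ξ 0 + u| ^ (-(1 / 2) : ℝ))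
    (ξ' : EuclideanSpace ℝ (Fin 3)) :
    ∫ ξ, singularKernel C (ξ' - ξ) * A ξ ≤ (P + Q) * (4 + √(Real.pi / C)) ^ 3 := by
  let b : Fin 3 → ℝ := ![-u, ξ' 1, ξ' 2]
  let P' : Fin 3 → ℝ := ![P, 0, 0]
  let Q' : Fin 3 → ℝ := ![Q, 1, 1]
  have hP' : ∀ i, 0 ≤ P' i := Fin.forall_fin_succ.2 ⟨hP, by simp [P', Fin.forall_fin_two]⟩
  have hQ' : ∀ i, 0 ≤ Q' i := Fin.forall_fin_succ.2 ⟨hQ, by simp [Q', Fin.forall_fin_two]⟩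
  have pointwise : ∀ᵐ w : Fin 3 → ℝ,
      singularKernel C (ξ' - WithLp.toLp 2 w) * A (WithLp.toLp 2 w) ≤
        ∏ i, Real.exp (-C * (w i - ξ' i) ^ 2) * (P' i + Q' i * |w i - b i| ^ (-(1 / 2) : ℝ)) := by
    filter_upwards [Measure.ae_eval_ne (fun _ ↦ volume) 0 (-u),
      Measure.ae_eval_ne (fun _ ↦ volume) 1 (ξ' 1),
      Measure.ae_eval_ne (fun _ ↦ volume) 2 (ξ' 2)] with w h₀ h₁ h₂
    rw [singularKernel_sub_comm]
    refine (mul_le_mul (singularKernel_le C (sub_ne_zero.2 h₁) (sub_ne_zero.2 h₂))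
      (hA _ (by simpa [← eq_neg_iff_add_eq_zero] using h₀)) (hA₀ _) (by positivity)).trans_eq ?_
    simp only [Fin.prod_univ_three, b, P', Q', PiLp.sub_apply, Matrix.cons_val_zero,
      Matrix.cons_val_one, Matrix.cons_val, sub_neg_eq_add]
    ring
  rw [← (PiLp.volume_preserving_toLp (Fin 3)).integral_comp
    (MeasurableEquiv.toLp 2 (Fin 3 → ℝ)).measurableEmbedding]
  refine (integral_mono_of_nonneg
    (.of_forall fun w ↦ mul_nonneg (singularKernel_nonneg _ _) (hA₀ _))
    (integrable_prod_exp_neg_mul_sq_mul_add_rpow_abs hC (by norm_num) (by norm_num) ξ' b P' Q')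
    pointwise).trans ?_
  refine (integral_prod_exp_neg_mul_sq_mul_add_rpow_abs_le hC (by norm_num) (by norm_num)
    ξ' b hP' hQ').trans_eq ?_
  simp only [Fin.prod_univ_three, P', Q', Matrix.cons_val_zero, Matrix.cons_val_one,
    Matrix.cons_val]
  ring

/-- The velocity average `∫ e^{-θ|ξ'|²} ∫ e^{-C|ξ'-ξ''|²} / |ξ'-ξ''| · A(ξ'') dξ'' dξ'`. -/
def velocityAverage (C θ : ℝ) (A : EuclideanSpace ℝ (Fin 3) → ℝ) : ℝ :=
  ∫ ξ' : EuclideanSpace ℝ (Fin 3), Real.exp (-θ * ‖ξ'‖ ^ 2) *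
    ∫ ξ'' : EuclideanSpace ℝ (Fin 3), singularKernel C (ξ' - ξ'') * A ξ''

lemma velocityAverage_nonneg (C θ : ℝ) {A : EuclideanSpace ℝ (Fin 3) → ℝ} (hA : ∀ ξ, 0 ≤ A ξ) :
    0 ≤ velocityAverage C θ A :=
  integral_nonneg fun _ ↦ mul_nonneg (Real.exp_nonneg _) <|
    integral_nonneg fun ξ ↦ mul_nonneg (singularKernel_nonneg _ _) (hA ξ)

lemma integrable_exp_neg_mul_sq_norm {V : Type*} [NormedAddCommGroup V] [InnerProductSpace ℝ V]
    [FiniteDimensional ℝ V] [MeasurableSpace V] [BorelSpace V] {b : ℝ} (hb : 0 < b) :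
    Integrable fun v : V ↦ Real.exp (-b * ‖v‖ ^ 2) := by
  refine .of_integral_ne_zero ?_
  rw [GaussianFourier.integral_rexp_neg_mul_sq_norm hb]
  positivity

/-- The constant in the bound of `velocityAverage` produced by `velocityAverage_le`. -/
def velocityConst (C θ : ℝ) : ℝ :=
  (Real.pi / θ) ^ (3 / 2 : ℝ) * (4 + √(Real.pi / C)) ^ 3

lemma velocityConst_pos (C : ℝ) {θ : ℝ} (hθ : 0 < θ) : 0 < velocityConst C θ := by
  unfold velocityConst
  positivity

lemma velocityAverage_le (hC : 0 < C) {θ : ℝ} (hθ : 0 < θ) (u : ℝ) {P Q : ℝ}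
    (hP : 0 ≤ P) (hQ : 0 ≤ Q) {A : EuclideanSpace ℝ (Fin 3) → ℝ} (hA₀ : ∀ ξ, 0 ≤ A ξ)
    (hA : ∀ ξ, ξ 0 + u ≠ 0 → A ξ ≤ P + Q * |ξ 0 + u| ^ (-(1 / 2) : ℝ)) :
    velocityAverage C θ A ≤ velocityConst C θ * (P + Q) := by
  calc
    velocityAverage C θ A ≤ ∫ ξ' : EuclideanSpace ℝ (Fin 3),
        Real.exp (-θ * ‖ξ'‖ ^ 2) * ((P + Q) * (4 + √(Real.pi / C)) ^ 3) := by
      refine integral_mono_of_nonneg (.of_forall fun ξ' ↦ ?_)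
        ((integrable_exp_neg_mul_sq_norm hθ).mul_const _) (.of_forall fun ξ' ↦ ?_)
      · exact mul_nonneg (Real.exp_nonneg _) <|
          integral_nonneg fun ξ ↦ mul_nonneg (singularKernel_nonneg _ _) (hA₀ ξ)
      · exact mul_le_mul_of_nonneg_left (integral_singularKernel_mul_le hC u hP hQ hA₀ hA ξ')
          (Real.exp_nonneg _)
    _ = velocityConst C θ * (P + Q) := by
      rw [integral_mul_const, GaussianFourier.integral_rexp_neg_mul_sq_norm hθ,
        finrank_euclideanSpace_fin, velocityConst, Nat.cast_ofNat]
      ring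

end Velocity

section Divergence

lemma integrableOn_of_comp_eval {ι : Type*} [Fintype ι] {s : ι → Set ℝ}
    (hs : ∀ i, volume (s i) = 1) {g : ℝ → ℝ} {i : ι}
    (hg : AEStronglyMeasurable g (volume.restrict (s i)))
    (h : IntegrableOn (fun w : ι → ℝ ↦ g (w i)) (Set.univ.pi s)) : IntegrableOn g (s i) := by
  have (j : ι) : IsProbabilityMeasure (volume.restrict (s j)) := ⟨by simp [hs]⟩
  rw [IntegrableOn, volume_pi, Measure.restrict_pi_pi] at h
  exact ((measurePreserving_eval (fun j ↦ volume.restrict (s j)) i).integrable_comp hg).1 h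

lemma not_integrableOn_Ioc_add_inv (u : ℝ) :
    ¬ IntegrableOn (fun w ↦ (w + u)⁻¹) (Set.Ioc (-u) (-u + 1)) := by
  rw [← intervalIntegrable_iff_integrableOn_Ioc_of_le (by linarith)]
  simpa using not_intervalIntegrable_of_sub_inv_isBigO_punctured (c := -u)
    (Asymptotics.isBigO_refl _ _) (by linarith : -u ≠ -u + 1) Set.left_mem_uIcc

lemma exists_pos_forall_le_singularKernel (C : ℝ) {K : Set (EuclideanSpace ℝ (Fin 3))}
    (hK : Bornology.IsBounded K) : ∃ κ > 0, ∀ z ∈ K, z ≠ 0 → κ ≤ singularKernel C z := by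
  obtain ⟨R, hR, norm_le⟩ := hK.exists_pos_norm_le
  refine ⟨Real.exp (-(|C| * R ^ 2)) / R, by positivity, fun z hz hz₀ ↦ ?_⟩
  have : 0 < ‖z‖ := norm_pos_iff.2 hz₀
  have := norm_le z hz
  rw [singularKernel, neg_mul]
  gcongr
  exact le_abs_self C

lemma not_integrable_singularKernel_mul (C : ℝ) {δ u : ℝ} (hδ : 0 < δ)
    {A : EuclideanSpace ℝ (Fin 3) → ℝ}
    (hA : ∀ ξ, 0 < ξ 0 + u → ξ 0 + u ≤ 1 → δ * (ξ 0 + u)⁻¹ ≤ A ξ)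
    (ξ' : EuclideanSpace ℝ (Fin 3)) :
    ¬ Integrable fun ξ ↦ singularKernel C (ξ' - ξ) * A ξ := by
  intro h
  let cube : Set (Fin 3 → ℝ) := Set.univ.pi fun _ ↦ Set.Ioc (-u) (-u + 1)
  have cube_measurable : MeasurableSet cube := .univ_pi fun _ ↦ measurableSet_Ioc
  have pos_of_mem {w : Fin 3 → ℝ} (hw : w ∈ cube) : 0 < w 0 + u := by linarith [(hw 0 trivial).1]
  have bounded : Bornology.IsBounded ((fun w ↦ ξ' - WithLp.toLp 2 w) '' cube) :=
    ((isCompact_univ_pi fun _ ↦ isCompact_Icc).image (by fun_prop)).isBounded.subset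
      (Set.image_mono (Set.pi_mono fun _ _ ↦ Set.Ioc_subset_Icc_self))
  obtain ⟨κ, hκ, le_kernel⟩ := exists_pos_forall_le_singularKernel C bounded
  have lower_bound : ∀ᵐ w : Fin 3 → ℝ, w ∈ cube →
      κ * δ * (w 0 + u)⁻¹ ≤ singularKernel C (ξ' - WithLp.toLp 2 w) * A (WithLp.toLp 2 w) := by
    filter_upwards [Measure.ae_eval_ne (fun _ ↦ volume) 0 (ξ' 0)] with w hw₀ hw
    have h_ne : ξ' - WithLp.toLp 2 w ≠ 0 := fun h ↦
      hw₀ (congrArg (fun ξ : EuclideanSpace ℝ (Fin 3) ↦ ξ 0) (sub_eq_zero.1 h)).symm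
    have hw_pos := pos_of_mem hw
    rw [mul_assoc]
    exact mul_le_mul (le_kernel _ ⟨w, hw, rfl⟩ h_ne)
      (hA (WithLp.toLp 2 w) hw_pos (by linarith [(hw 0 trivial).2]))
      (by positivity) (singularKernel_nonneg _ _)
  have h_pi : Integrable fun w : Fin 3 → ℝ ↦
      singularKernel C (ξ' - WithLp.toLp 2 w) * A (WithLp.toLp 2 w) :=
    ((PiLp.volume_preserving_toLp (Fin 3)).integrable_comp_emb
      (MeasurableEquiv.toLp 2 (Fin 3 → ℝ)).measurableEmbedding).2 h
  have inv_measurable : Measurable fun w : ℝ ↦ (w + u)⁻¹ := by fun_prop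
  refine not_integrableOn_Ioc_add_inv u (integrableOn_of_comp_eval (i := (0 : Fin 3))
    (s := fun _ ↦ Set.Ioc (-u) (-u + 1)) (by simp) inv_measurable.aestronglyMeasurable ?_)
  refine (h_pi.const_mul (κ * δ)⁻¹).integrableOn.mono'
    (inv_measurable.comp (measurable_pi_apply 0)).aestronglyMeasurable ?_
  filter_upwards [ae_restrict_of_ae lower_bound, ae_restrict_mem cube_measurable] with w hle hw
  have hw_pos := pos_of_mem hw
  rw [Real.norm_of_nonneg (by positivity), le_inv_mul_iff₀ (by positivity)]
  exact hle hw

lemma velocityAverage_eq_zero (C θ : ℝ) {δ u : ℝ} (hδ : 0 < δ)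
    {A : EuclideanSpace ℝ (Fin 3) → ℝ}
    (hA : ∀ ξ, 0 < ξ 0 + u → ξ 0 + u ≤ 1 → δ * (ξ 0 + u)⁻¹ ≤ A ξ) :
    velocityAverage C θ A = 0 := by
  simp only [velocityAverage, integral_undef (not_integrable_singularKernel_mul C hδ hA _),
    mul_zero, integral_zero]

end Divergence

/-- `χ` is comparable to `s ↦ min s 1` on `[0, ∞)`, with lower constant `m` and upper constant `N`.
The cutoff of the kinetic weight is such a function. -/
structure IsCutoff (χ : ℝ → ℝ) (m N : ℝ) : Prop where
  lower_pos : 0 < m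
  mul_min_le : ∀ s ≥ 0, m * min s 1 ≤ χ s
  le_mul_min : ∀ s ≥ 0, χ s ≤ N * min s 1

lemma isCutoff_of_monotoneOn {χ : ℝ → ℝ} (hmono : MonotoneOn χ (Set.Ici 0))
    (hid : ∀ s : ℝ, 0 ≤ s → s ≤ 1 / 2 → χ s = s) (hone : ∀ s : ℝ, 2 ≤ s → χ s = 1) :
    IsCutoff χ (1 / 2) 2 := by
  have half_le {s : ℝ} (hs : 1 / 2 ≤ s) : 1 / 2 ≤ χ s :=
    (hid (1 / 2) (by norm_num) le_rfl).ge.trans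
      (hmono (Set.mem_Ici.2 (by norm_num)) (Set.mem_Ici.2 (by linarith)) hs)
  have le_one {s : ℝ} (hs : 0 ≤ s) : χ s ≤ 1 :=
    (hmono hs (Set.mem_Ici.2 (hs.trans (le_max_left s 2))) (le_max_left s 2)).trans_eq
      (hone _ (le_max_right s 2))
  refine ⟨by norm_num, fun s hs ↦ ?_, fun s hs ↦ ?_⟩ <;> rcases le_or_gt s (1 / 2) with h | h
  · rw [hid s hs h, min_eq_left (by linarith)]
    linarith
  · linarith [half_le h.le, min_le_right s 1]
  · rw [hid s hs h, min_eq_left (by linarith)]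
    linarith
  · have : 1 / 2 ≤ min s 1 := le_min h.le (by norm_num)
    linarith [le_one hs]

namespace IsCutoff

variable {χ : ℝ → ℝ} {m N s : ℝ}

lemma nonneg (h : IsCutoff χ m N) (hs : 0 ≤ s) : 0 ≤ χ s := by
  have := h.lower_pos
  exact le_trans (by positivity) (h.mul_min_le s hs)

lemma pos (h : IsCutoff χ m N) (hs : 0 < s) : 0 < χ s := by
  have := h.lower_pos
  exact lt_of_lt_of_le (by positivity) (h.mul_min_le s hs.le)

lemma upper_pos (h : IsCutoff χ m N) : 0 < N := by
  simpa using (h.pos one_pos).trans_le (h.le_mul_min 1 zero_le_one)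

lemma apply_zero (h : IsCutoff χ m N) : χ 0 = 0 :=
  le_antisymm (by simpa using h.le_mul_min 0 le_rfl) (h.nonneg le_rfl)

lemma inv_le (h : IsCutoff χ m N) (hs : 0 < s) : (χ s)⁻¹ ≤ m⁻¹ * (1 + s⁻¹) := by
  have := h.lower_pos
  have min_inv_le : (min s 1)⁻¹ ≤ 1 + s⁻¹ := by
    rcases min_choice s 1 with hmin | hmin <;> rw [hmin]
    · exact le_add_of_nonneg_left zero_le_one
    · exact inv_one.trans_le (le_add_of_nonneg_right (by positivity))
  calc
    (χ s)⁻¹ ≤ (m * min s 1)⁻¹ := inv_anti₀ (by positivity) (h.mul_min_le s hs.le)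
    _ ≤ m⁻¹ * (1 + s⁻¹) := by
      rw [mul_inv]
      gcongr

lemma mul_inv_le_inv (h : IsCutoff χ m N) (hs : 0 < s) : N⁻¹ * s⁻¹ ≤ (χ s)⁻¹ := by
  rw [← mul_inv]
  exact inv_anti₀ (h.pos hs) ((h.le_mul_min s hs.le).trans
    (mul_le_mul_of_nonneg_left (min_le_left s 1) h.upper_pos.le))

lemma le_upper (h : IsCutoff χ m N) (hs : 0 ≤ s) : χ s ≤ N :=
  (h.le_mul_min s hs).trans (mul_le_of_le_one_right h.upper_pos.le (min_le_right s 1))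

lemma le_mul_sqrt (h : IsCutoff χ m N) (hs : 0 ≤ s) : χ s ≤ N * √s := by
  have min_le_sqrt : min s 1 ≤ √s :=
    Real.le_sqrt_of_sq_le (by nlinarith [min_le_left s 1, min_le_right s 1, le_min hs zero_le_one])
  exact (h.le_mul_min s hs).trans (mul_le_mul_of_nonneg_left min_le_sqrt h.upper_pos.le)

end IsCutoff

section KineticWeight

variable {u c ν₀ x : ℝ} {ξ : EuclideanSpace ℝ (Fin 3)}

lemma alphaTilde_nonneg (u c ν₀ x : ℝ) (ξ : EuclideanSpace ℝ (Fin 3)) :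
    0 ≤ alphaTilde u c ν₀ x ξ :=
  Real.sqrt_nonneg _

lemma alphaTilde_zero (u c ν₀ : ℝ) (ξ : EuclideanSpace ℝ (Fin 3)) :
    alphaTilde u c ν₀ 0 ξ = |ξ 0 + u| := by
  simp [alphaTilde, Real.sqrt_sq_eq_abs]

lemma alphaTilde_pos (h : ξ 0 + u ≠ 0 ∨ c * ν₀ * x ≠ 0) : 0 < alphaTilde u c ν₀ x ξ := by
  rw [alphaTilde, ← mul_pow]
  rcases h with h | h <;> positivity

lemma inv_alphaTilde_le (hξ : ξ 0 + u ≠ 0) (hx : c * ν₀ * x ≠ 0) :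
    (alphaTilde u c ν₀ x ξ)⁻¹ ≤ |ξ 0 + u| ^ (-(1 / 2) : ℝ) * |c * ν₀ * x| ^ (-(1 / 2) : ℝ) := by
  rw [alphaTilde, ← mul_pow]
  exact inv_sqrt_sq_add_sq_le hξ hx

lemma alphaTilde_le {M : ℝ} (hξ : |ξ 0 + u| ≤ M) (hx : |x| ≤ M) :
    alphaTilde u c ν₀ x ξ ≤ (1 + |c * ν₀|) * M := by
  have hM : 0 ≤ M := (abs_nonneg x).trans hx
  refine Real.sqrt_le_iff.2 ⟨by positivity, ?_⟩
  calc
    _ ≤ M ^ 2 + (c * ν₀) ^ 2 * M ^ 2 :=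
      add_le_add (sq_le_sq.2 (hξ.trans (le_abs_self M)))
        (mul_le_mul_of_nonneg_left (sq_le_sq.2 (hx.trans (le_abs_self M))) (sq_nonneg _))
    _ ≤ ((1 + |c * ν₀|) * M) ^ 2 := by
      rw [← sq_abs (c * ν₀)]
      nlinarith [mul_nonneg (abs_nonneg (c * ν₀)) (sq_nonneg M)]

namespace IsCutoff

variable {χ : ℝ → ℝ} {m N : ℝ}

lemma inv_apply_alphaTilde_le (h : IsCutoff χ m N) (hξ : ξ 0 + u ≠ 0) (hx : c * ν₀ * x ≠ 0) :
    (χ (alphaTilde u c ν₀ x ξ))⁻¹ ≤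
      m⁻¹ + m⁻¹ * |c * ν₀ * x| ^ (-(1 / 2) : ℝ) * |ξ 0 + u| ^ (-(1 / 2) : ℝ) := by
  have := h.lower_pos
  calc
    _ ≤ m⁻¹ * (1 + (alphaTilde u c ν₀ x ξ)⁻¹) := h.inv_le (alphaTilde_pos (.inl hξ))
    _ ≤ m⁻¹ * (1 + |ξ 0 + u| ^ (-(1 / 2) : ℝ) * |c * ν₀ * x| ^ (-(1 / 2) : ℝ)) := by
      gcongr
      exact inv_alphaTilde_le hξ hx
    _ = _ := by ring

lemma velocityAverage_inv_le (h : IsCutoff χ m N) (hx : c * ν₀ * x ≠ 0) {C θ : ℝ} (hC : 0 < C)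
    (hθ : 0 < θ) (u : ℝ) :
    velocityAverage C θ (fun ξ ↦ (χ (alphaTilde u c ν₀ x ξ))⁻¹) ≤
      velocityConst C θ * (m⁻¹ + m⁻¹ * |c * ν₀ * x| ^ (-(1 / 2) : ℝ)) := by
  have := h.lower_pos
  exact velocityAverage_le hC hθ u (by positivity) (by positivity)
    (fun ξ ↦ inv_nonneg.2 (h.nonneg (alphaTilde_nonneg u c ν₀ x ξ)))
    fun ξ hξ ↦ h.inv_apply_alphaTilde_le hξ hx

lemma velocityAverage_inv_zero (h : IsCutoff χ m N) (C θ u c ν₀ : ℝ) :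
    velocityAverage C θ (fun ξ ↦ (χ (alphaTilde u c ν₀ 0 ξ))⁻¹) = 0 := by
  refine velocityAverage_eq_zero C θ (inv_pos.2 h.upper_pos) (u := u) fun ξ hξ _ ↦ ?_
  simpa only [alphaTilde_zero, abs_of_pos hξ] using h.mul_inv_le_inv hξ

lemma apply_alphaTilde_mul_add_rpow_le (h : IsCutoff χ m N) {M P Q : ℝ} (hM : 0 < M)
    (hP : 0 ≤ P) (hQ : 0 ≤ Q) (hξ : |ξ 0 + u| ≤ M) (hx : |x| ≤ M) :
    χ (alphaTilde u c ν₀ x ξ) * (P + Q * M ^ (-(1 / 2) : ℝ)) ≤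
      N * (P + Q * √(1 + |c * ν₀|)) := by
  have hα := alphaTilde_nonneg u c ν₀ x ξ
  have := h.upper_pos
  have apply_mul_rpow_le :
      χ (alphaTilde u c ν₀ x ξ) * M ^ (-(1 / 2) : ℝ) ≤ N * √(1 + |c * ν₀|) := by
    rw [Real.rpow_neg hM.le, ← Real.sqrt_eq_rpow, mul_inv_le_iff₀ (Real.sqrt_pos.2 hM), mul_assoc,
      ← Real.sqrt_mul (by positivity)]
    refine (h.le_mul_sqrt hα).trans ?_
    gcongr
    exact alphaTilde_le hξ hx
  calc
    _ = χ (alphaTilde u c ν₀ x ξ) * P +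
        Q * (χ (alphaTilde u c ν₀ x ξ) * M ^ (-(1 / 2) : ℝ)) := by ring
    _ ≤ N * P + Q * (N * √(1 + |c * ν₀|)) := by
      gcongr
      exact h.le_upper hα
    _ = _ := by ring

end IsCutoff

end KineticWeight

section Characteristic

variable {a r s t x : ℝ}

lemma max_mul_min_le_mul_sub (ht : 1 ≤ t) (hx : 0 ≤ x) (hxt : 0 ≤ x - t * a) (hs : 0 ≤ s)
    (hst : s ≤ t) : max x |a| * min s (t - s) ≤ t * (x - a * (t - s)) := by
  have hmin : 0 ≤ min s (t - s) := le_min hs (sub_nonneg.2 hst)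
  rw [max_mul_of_nonneg _ _ hmin]
  rcases le_or_gt a 0 with ha | ha
  · have ha' : 0 ≤ -a := neg_nonneg.2 ha
    have h_sub : -a * (t - s) ≤ t * (-a * (t - s)) :=
      le_mul_of_one_le_left (mul_nonneg ha' (sub_nonneg.2 hst)) ht
    rw [abs_of_nonpos ha]
    refine max_le ?_ ?_
    · nlinarith [mul_le_mul_of_nonneg_left ((min_le_left s (t - s)).trans hst) hx]
    · nlinarith [mul_le_mul_of_nonneg_left (min_le_right s (t - s)) ha', mul_nonneg hx hs]
  · rw [abs_of_pos ha]
    have h_min : ∀ b ≥ 0, b * min s (t - s) ≤ b * s := fun b hb ↦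
      mul_le_mul_of_nonneg_left (min_le_left s (t - s)) hb
    refine max_le ((h_min x hx).trans ?_) ((h_min a ha.le).trans ?_)
    · linarith [mul_nonneg hxt (sub_nonneg.2 hst)]
    · calc
        a * s ≤ t * (a * s) := le_mul_of_one_le_left (by positivity) ht
        _ ≤ t * (x - a * (t - s)) := by nlinarith

lemma characteristic_pos (ht : 1 ≤ t) (hx : 0 ≤ x) (hxt : 0 ≤ x - t * a) (hM : 0 < max x |a|)
    (hs : s ∈ Set.Ioo 0 t) : 0 < x - a * (t - s) :=
  pos_of_mul_pos_right
    ((mul_pos hM (lt_min hs.1 (sub_pos.2 hs.2))).trans_le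
      (max_mul_min_le_mul_sub ht hx hxt hs.1.le hs.2.le)) (zero_le_one.trans ht)

lemma characteristic_rpow_le (hr : 0 ≤ r) (ht : 1 ≤ t) (hx : 0 ≤ x) (hxt : 0 ≤ x - t * a)
    (hM : 0 < max x |a|) (hs : s ∈ Set.Ioo 0 t) :
    (x - a * (t - s)) ^ (-r) ≤ (max x |a| / t) ^ (-r) * (s ^ (-r) + (t - s) ^ (-r)) := by
  have ht₀ : 0 < t := one_pos.trans_le ht
  have hs₀ : 0 < s := hs.1
  have hts : 0 < t - s := sub_pos.2 hs.2
  have hmin : 0 < min s (t - s) := lt_min hs₀ hts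
  have le_char : max x |a| / t * min s (t - s) ≤ x - a * (t - s) := by
    rw [div_mul_eq_mul_div, div_le_iff₀' ht₀]
    exact max_mul_min_le_mul_sub ht hx hxt hs₀.le hs.2.le
  calc
    (x - a * (t - s)) ^ (-r) ≤ (max x |a| / t * min s (t - s)) ^ (-r) :=
      Real.rpow_le_rpow_of_nonpos (by positivity) le_char (neg_nonpos.2 hr)
    _ = (max x |a| / t) ^ (-r) * min s (t - s) ^ (-r) := Real.mul_rpow (by positivity) hmin.le
    _ ≤ (max x |a| / t) ^ (-r) * (s ^ (-r) + (t - s) ^ (-r)) := by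
      gcongr
      rcases min_choice s (t - s) with h | h <;> rw [h]
      · exact le_add_of_nonneg_right (by positivity)
      · exact le_add_of_nonneg_left (by positivity)

lemma intervalIntegrable_rpow_neg_add_sub (hr : r < 1) (t : ℝ) :
    IntervalIntegrable (fun s ↦ s ^ (-r) + (t - s) ^ (-r)) volume 0 t := by
  have h : IntervalIntegrable (fun s : ℝ ↦ s ^ (-r)) volume 0 t :=
    intervalIntegral.intervalIntegrable_rpow' (by linarith)
  simpa using h.add (by simpa using (h.comp_sub_left t).symm)

lemma integral_rpow_neg_add_sub (hr : r < 1) (t : ℝ) :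
    ∫ s in 0..t, (s ^ (-r) + (t - s) ^ (-r)) = 2 / (1 - r) * t ^ (1 - r) := by
  have h : IntervalIntegrable (fun s : ℝ ↦ s ^ (-r)) volume 0 t :=
    intervalIntegral.intervalIntegrable_rpow' (by linarith)
  rw [intervalIntegral.integral_add h (by simpa using (h.comp_sub_left t).symm),
    intervalIntegral.integral_comp_sub_left (fun s ↦ s ^ (-r)), sub_self, sub_zero,
    integral_rpow (.inl (by linarith)), Real.zero_rpow (by linarith), neg_add_eq_sub]
  ring

/-- With `M = max x |a|`, the upper bound of `P + Q * (x - a * (t - s)) ^ (-r)` along a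
characteristic that `characteristic_rpow_le` provides. -/
def characteristicMajorant (r t M P Q s : ℝ) : ℝ :=
  P + Q * (M / t) ^ (-r) * (s ^ (-r) + (t - s) ^ (-r))

lemma intervalIntegrable_characteristicMajorant (hr : r < 1) (t M P Q : ℝ) :
    IntervalIntegrable (characteristicMajorant r t M P Q) volume 0 t :=
  intervalIntegrable_const.add ((intervalIntegrable_rpow_neg_add_sub hr t).const_mul _)

lemma integral_characteristicMajorant (hr : r < 1) (ht : 0 < t) {M : ℝ} (hM : 0 ≤ M) (P Q : ℝ) :
    ∫ s in 0..t, characteristicMajorant r t M P Q s =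
      t * (P + Q * (2 / (1 - r)) * M ^ (-r)) := by
  simp only [characteristicMajorant]
  rw [intervalIntegral.integral_add intervalIntegrable_const
      ((intervalIntegrable_rpow_neg_add_sub hr t).const_mul _),
    intervalIntegral.integral_const_mul, integral_rpow_neg_add_sub hr,
    intervalIntegral.integral_const, sub_zero, smul_eq_mul, Real.div_rpow hM ht.le,
    Real.rpow_neg ht.le, div_inv_eq_mul, sub_eq_add_neg 1 r, Real.rpow_add ht, Real.rpow_one,
    Real.rpow_neg ht.le]
  field_simp

lemma setIntegral_exp_mul_le {lam P Q : ℝ} {F : ℝ → ℝ} (hr₀ : 0 ≤ r) (hr : r < 1)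
    (hlam : 0 ≤ lam) (ht : 1 ≤ t) (hx : 0 ≤ x) (hxt : 0 ≤ x - t * a) (hM : 0 < max x |a|)
    (hQ : 0 ≤ Q) (hF₀ : ∀ s, 0 ≤ F s)
    (hF : ∀ s ∈ Set.Ioo 0 t, F s ≤ P + Q * (x - a * (t - s)) ^ (-r)) :
    ∫ s in Set.Icc 0 t, Real.exp (-lam * (t - s)) * F s ≤
      t * (P + Q * (2 / (1 - r)) * max x |a| ^ (-r)) := by
  have ht₀ : 0 < t := one_pos.trans_le ht
  let G : ℝ → ℝ := characteristicMajorant r t (max x |a|) P Q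
  have integrand_le : ∀ s ∈ Set.Ioo 0 t, Real.exp (-lam * (t - s)) * F s ≤ G s := fun s hs ↦ by
    calc
      Real.exp (-lam * (t - s)) * F s ≤ F s := by
        refine mul_le_of_le_one_left (hF₀ s) (Real.exp_le_one_iff.2 ?_)
        exact mul_nonpos_of_nonpos_of_nonneg (neg_nonpos.2 hlam) (sub_nonneg.2 hs.2.le)
      _ ≤ P + Q * (x - a * (t - s)) ^ (-r) := hF s hs
      _ ≤ G s := by
        simp only [G, characteristicMajorant, mul_assoc]
        gcongr
        exact characteristic_rpow_le hr₀ ht hx hxt hM hs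
  calc
    _ = ∫ s in Set.Ioo 0 t, Real.exp (-lam * (t - s)) * F s := integral_Icc_eq_integral_Ioo
    _ ≤ ∫ s in Set.Ioo 0 t, G s :=
      integral_mono_of_nonneg (.of_forall fun s ↦ mul_nonneg (Real.exp_nonneg _) (hF₀ s))
        ((intervalIntegrable_iff_integrableOn_Ioo_of_le ht₀.le).1
          (intervalIntegrable_characteristicMajorant hr t (max x |a|) P Q))
        ((ae_restrict_mem measurableSet_Ioo).mono integrand_le)
    _ = ∫ s in 0..t, G s := by
      rw [intervalIntegral.integral_of_le ht₀.le, integral_Ioc_eq_integral_Ioo]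
    _ = t * (P + Q * (2 / (1 - r)) * max x |a| ^ (-r)) :=
      integral_characteristicMajorant hr ht₀ hM.le P Q

end Characteristic

section NonlocalEstimate

variable {χ : ℝ → ℝ} {m N C θ c ν₀ lam t x : ℝ}

/-- The constant of `IsCutoff.setIntegral_velocityAverage_le`. -/
def nonlocalConst (C θ k m N : ℝ) : ℝ :=
  velocityConst C θ * m⁻¹ * N * (1 + 4 * |k| ^ (-(1 / 2) : ℝ) * √(1 + |k|))

lemma nonlocalConst_pos (hθ : 0 < θ) (hm : 0 < m) (hN : 0 < N) (C k : ℝ) :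
    0 < nonlocalConst C θ k m N := by
  have := velocityConst_pos C hθ
  unfold nonlocalConst
  positivity

namespace IsCutoff

lemma setIntegral_velocityAverage_le_of_pos (h : IsCutoff χ m N) (hC : 0 < C) (hθ : 0 < θ)
    (hk : c * ν₀ ≠ 0) (u : ℝ) (hlam : 0 ≤ lam) (ht : 1 ≤ t) (hx : 0 ≤ x)
    {ξ : EuclideanSpace ℝ (Fin 3)} (hxt : 0 ≤ x - t * (ξ 0 + u)) (hM : 0 < max x |ξ 0 + u|) :
    ∫ s in Set.Icc 0 t, Real.exp (-lam * (t - s)) * velocityAverage C θ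
        (fun ξ'' ↦ (χ (alphaTilde u c ν₀ (x - (ξ 0 + u) * (t - s)) ξ''))⁻¹) ≤
      velocityConst C θ * m⁻¹ * t *
        (1 + 4 * |c * ν₀| ^ (-(1 / 2) : ℝ) * max x |ξ 0 + u| ^ (-(1 / 2) : ℝ)) := by
  have hV := velocityConst_pos C hθ
  have hm := h.lower_pos
  refine (setIntegral_exp_mul_le (r := 1 / 2) (P := velocityConst C θ * m⁻¹)
    (Q := velocityConst C θ * m⁻¹ * |c * ν₀| ^ (-(1 / 2) : ℝ)) (by norm_num) (by norm_num)
    hlam ht hx hxt hM (by positivity) (fun s ↦ velocityAverage_nonneg C θ fun ξ'' ↦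
      inv_nonneg.2 (h.nonneg (alphaTilde_nonneg u c ν₀ _ ξ''))) fun s hs ↦ ?_).trans_eq ?_
  · have hy := characteristic_pos ht hx hxt hM hs
    refine (h.velocityAverage_inv_le (mul_ne_zero hk hy.ne') hC hθ u).trans_eq ?_
    rw [abs_mul, Real.mul_rpow (abs_nonneg _) (abs_nonneg _), abs_of_pos hy]
    ring
  · ring

theorem setIntegral_velocityAverage_le (h : IsCutoff χ m N) (hC : 0 < C) (hθ : 0 < θ)
    (hk : c * ν₀ ≠ 0) (u : ℝ) (hlam : 0 ≤ lam) (ht : 1 ≤ t) (hx : 0 ≤ x)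
    {ξ : EuclideanSpace ℝ (Fin 3)} (hxt : 0 ≤ x - t * (ξ 0 + u)) :
    ∫ s in Set.Icc 0 t, Real.exp (-lam * (t - s)) * velocityAverage C θ
        (fun ξ'' ↦ (χ (alphaTilde u c ν₀ (x - (ξ 0 + u) * (t - s)) ξ''))⁻¹) ≤
      nonlocalConst C θ (c * ν₀) m N * t / χ (alphaTilde u c ν₀ x ξ) := by
  rcases (le_max_of_le_left hx : 0 ≤ max x |ξ 0 + u|).eq_or_lt with hM | hM
  · -- If `x = ξ₁ + u = 0`, the velocity integrals diverge and `α(x, ξ) = 0`: by the conventions for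
    -- non-integrable functions and for division by zero, both sides vanish.
    obtain rfl : x = 0 := le_antisymm (hM ▸ le_max_left _ _) hx
    have hξ : ξ 0 + u = 0 := abs_nonpos_iff.1 (hM ▸ le_max_right _ _)
    rw [alphaTilde_zero, hξ, abs_zero, h.apply_zero, div_zero]
    simp only [zero_mul, sub_zero, h.velocityAverage_inv_zero, mul_zero, integral_zero, le_refl]
  · have hα : 0 < alphaTilde u c ν₀ x ξ :=
      alphaTilde_pos ((lt_max_iff.1 hM).symm.imp abs_pos.1 fun hx ↦ mul_ne_zero hk hx.ne')
    have hV := velocityConst_pos C hθ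
    have hm := h.lower_pos
    rw [le_div_iff₀' (h.pos hα)]
    calc
      _ ≤ χ (alphaTilde u c ν₀ x ξ) * (velocityConst C θ * m⁻¹ * t *
          (1 + 4 * |c * ν₀| ^ (-(1 / 2) : ℝ) * max x |ξ 0 + u| ^ (-(1 / 2) : ℝ))) :=
        mul_le_mul_of_nonneg_left
          (h.setIntegral_velocityAverage_le_of_pos hC hθ hk u hlam ht hx hxt hM) (h.pos hα).le
      _ = velocityConst C θ * m⁻¹ * t * (χ (alphaTilde u c ν₀ x ξ) *
          (1 + 4 * |c * ν₀| ^ (-(1 / 2) : ℝ) * max x |ξ 0 + u| ^ (-(1 / 2) : ℝ))) := by ring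
      _ ≤ velocityConst C θ * m⁻¹ * t *
          (N * (1 + 4 * |c * ν₀| ^ (-(1 / 2) : ℝ) * √(1 + |c * ν₀|))) := by
        refine mul_le_mul_of_nonneg_left ?_ (by positivity)
        exact h.apply_alphaTilde_mul_add_rpow_le hM zero_le_one (by positivity) (le_max_right _ _)
          ((abs_of_nonneg hx).trans_le (le_max_left _ _))
      _ = _ := by
        rw [nonlocalConst]
        ring

end IsCutoff

theorem nln_inner_two_general (hχmono : MonotoneOn χ (Set.Ici 0))
    (hid : ∀ s : ℝ, 0 ≤ s → s ≤ 1 / 2 → χ s = s) (hone : ∀ s : ℝ, 2 ≤ s → χ s = 1)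
    (hk : c * ν₀ ≠ 0) (hC : 0 < C) (hθ : 0 < θ) :
    ∃ C' > 0, ∀ u lam : ℝ, 0 ≤ lam → ∀ t ≥ 1, ∀ x ≥ 0, ∀ ξ : EuclideanSpace ℝ (Fin 3),
      0 ≤ x - t * (ξ 0 + u) →
        ∫ s in Set.Icc 0 t, Real.exp (-lam * (t - s)) *
            ∫ ξ' : EuclideanSpace ℝ (Fin 3), Real.exp (-θ * ‖ξ'‖ ^ 2) *
              ∫ ξ'' : EuclideanSpace ℝ (Fin 3),
                Real.exp (-C * ‖ξ' - ξ''‖ ^ 2) / ‖ξ' - ξ''‖ *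
                  (χ (alphaTilde u c ν₀ (x - (ξ 0 + u) * (t - s)) ξ''))⁻¹ ≤
          C' * t / χ (alphaTilde u c ν₀ x ξ) := by
  have hχ := isCutoff_of_monotoneOn hχmono hid hone
  exact ⟨_, nonlocalConst_pos hθ hχ.lower_pos hχ.upper_pos C (c * ν₀),
    fun u _ hlam _ ht _ hx _ ↦ hχ.setIntegral_velocityAverage_le hC hθ hk u hlam ht hx⟩

end NonlocalEstimate

/-- second part of Lemma NLN-inner, with `c = 1/8`:
for every `C > 0` and `θ ∈ (0,1/4)` there are `C' > 0` and `t₀ ≥ 1` such that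
for all `t ≥ t₀`, `x ≥ 0` and `ξ` with `x − t(ξ₁+u) ≥ 0`,
`∫₀^t e^{−ν(ξ)(t−s)} ∫ e^{−θ|ξ'|²} ∫ e^{−C|ξ'−ξ''|²}/|ξ'−ξ''| ·
    α(x−(ξ₁+u)(t−s),ξ'')⁻¹ dξ'' dξ' ds ≤ C' t / α(x,ξ)`. -/
theorem nln_inner_two (ν₀ u : ℝ) (hν₀ : 0 < ν₀) (hu : |u| ≤ 1/2)
    (χ χ' : ℝ → ℝ)
    (hderiv : ∀ s ≥ (0:ℝ), HasDerivAt χ (χ' s) s)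
    (hcont : ContinuousOn χ' (Set.Ici (0:ℝ)))
    (hmono : ∀ s ≥ (0:ℝ), 0 ≤ χ' s)
    (hid : ∀ s : ℝ, 0 ≤ s → s ≤ 1/2 → χ s = s)
    (hone : ∀ s : ℝ, 2 ≤ s → χ s = 1)
    (hbound : ∀ s ≥ (0:ℝ), |χ' s| ≤ 1)
    (ν : EuclideanSpace ℝ (Fin 3) → ℝ) (hνmeas : Measurable ν)
    (hνlb : ∀ ξ, ν₀ * (1 + ‖ξ‖) ≤ ν ξ) :
    ∀ C > (0:ℝ), ∀ θ : ℝ, 0 < θ → θ < 1/4 →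
      ∃ C' > (0:ℝ), ∃ t₀ ≥ (1:ℝ), ∀ t ≥ t₀,
        ∀ x ≥ (0:ℝ), ∀ ξ : EuclideanSpace ℝ (Fin 3), 0 ≤ x - t * (ξ 0 + u) →
          (∫ s in Set.Icc (0:ℝ) t, Real.exp (-ν ξ * (t - s)) *
              ∫ ξ' : EuclideanSpace ℝ (Fin 3), Real.exp (-θ * ‖ξ'‖ ^ 2) *
                ∫ ξ'' : EuclideanSpace ℝ (Fin 3),
                  Real.exp (-C * ‖ξ' - ξ''‖ ^ 2) / ‖ξ' - ξ''‖ *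
                    (χ (alphaTilde u (1/8) ν₀ (x - (ξ 0 + u) * (t - s)) ξ''))⁻¹) ≤
            C' * t / χ (alphaTilde u (1/8) ν₀ x ξ) := by
  have hχmono : MonotoneOn χ (Set.Ici 0) :=
    monotoneOn_of_hasDerivWithinAt_nonneg (convex_Ici 0)
      (fun s hs ↦ (hderiv s hs).continuousAt.continuousWithinAt)
      (fun s hs ↦ (hderiv s (interior_subset hs)).hasDerivWithinAt)
      fun s hs ↦ hmono s (interior_subset hs)
  intro C hC θ hθ _
  obtain ⟨C', hC', h⟩ := nln_inner_two_general hχmono hid hone (c := 1 / 8) (ν₀ := ν₀)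
    (by positivity) hC hθ
  exact ⟨C', hC', 1, le_rfl, fun t ht x hx ξ ↦
    h u (ν ξ) ((by positivity : 0 ≤ ν₀ * (1 + ‖ξ‖)).trans (hνlb ξ)) t ht x hx ξ⟩
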